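/- Let A and C be n×n complex Hermitian positive semidefinite matrices. Then det(I + A + C) ≤ det(I + A) · det(I + C), where all three determinants are real numbers ≥ 1. -/

import Mathlib

open Matrix ComplexOrder

/-!
Factor `C = Rᴴ * R` and put `P = 1 + A`, which is positive definite. The matrix determinant lemma
gives `det (P + C) = det P * det (1 + R * P⁻¹ * Rᴴ)`. Since `P ≥ 1`, also `P⁻¹ ≤ 1`, hence
`1 + R * P⁻¹ * Rᴴ ≤ 1 + R * Rᴴ`, and the determinant is monotone on positive definite matrices.
Finally `det (1 + R * Rᴴ) = det (1 + Rᴴ * R) = det (1 + C)` by the Weinstein–Aronszajn identity.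
Monotonicity of the determinant reduces, again by the matrix determinant lemma, to `1 ≤ det (1 + B)`
for `B` positive semidefinite, which is read off from the eigenvalues.

All inequalities are proved in the partial order of `ℂ`, where `1 ≤ z` says that `z` is real and
`1 ≤ z.re`.
-/

/-- After diagonalizing `B`, the determinant is `∏ i, (1 + λ i)` with all `λ i ≥ 0`. -/
lemma one_le_det_one_add {n : ℕ} {B : Matrix (Fin n) (Fin n) ℂ} (hB : B.PosSemidef) :
    1 ≤ (1 + B).det := by
  have hdet : (1 + B).det = ∏ i, (1 + (hB.isHermitian.eigenvalues i : ℂ)) := by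
    have h1 : 1 + B = Unitary.conjStarAlgAut ℂ _ hB.isHermitian.eigenvectorUnitary
        (1 + diagonal (RCLike.ofReal ∘ hB.isHermitian.eigenvalues)) := by
      rw [map_add, map_one, ← hB.isHermitian.spectral_theorem]
    rw [h1, Unitary.conjStarAlgAut_apply, det_mul_right_comm,
      Unitary.mul_star_self_of_mem (Subtype.property _), one_mul,
      ← diagonal_one, diagonal_add, det_diagonal]
    rfl
  have hprod : (1 : ℝ) ≤ ∏ i, (1 + hB.isHermitian.eigenvalues i) :=
    Finset.prod_induction _ (fun x => 1 ≤ x) (fun _ _ => one_le_mul_of_one_le_of_one_le) le_rfl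
      fun i _ => le_add_of_nonneg_right (hB.eigenvalues_nonneg i)
  rw [hdet]
  exact_mod_cast hprod

lemma exists_eq_conjTranspose_mul_self {n : ℕ} {B : Matrix (Fin n) (Fin n) ℂ}
    (hB : B.PosSemidef) : ∃ R : Matrix (Fin n) (Fin n) ℂ, B = Rᴴ * R := by
  open scoped MatrixOrder in
  exact CStarAlgebra.nonneg_iff_eq_star_mul_self.mp (nonneg_iff_posSemidef.mpr hB)

lemma det_le_det_add {n : ℕ} {X Y : Matrix (Fin n) (Fin n) ℂ} (hX : X.PosDef)
    (hY : Y.PosSemidef) : X.det ≤ (X + Y).det := by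
  obtain ⟨S, rfl⟩ := exists_eq_conjTranspose_mul_self hY
  rw [det_add_mul _ _ ((isUnit_iff_isUnit_det X).mp hX.isUnit)]
  exact le_mul_of_one_le_right hX.det_pos.le
    (one_le_det_one_add (hX.inv.posSemidef.mul_mul_conjTranspose_same S))

/-- With `P = 1 + A`, one has `1 - P⁻¹ = P⁻¹ * (P * P - P) * P⁻¹` and `P * P - P = A + A * A`. -/
lemma posSemidef_one_sub_inv {n : ℕ} {A : Matrix (Fin n) (Fin n) ℂ} (hA : A.PosSemidef) :
    (1 - (1 + A)⁻¹).PosSemidef := by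
  have hP : (1 + A).PosDef := PosDef.one.add_posSemidef hA
  have hu := (isUnit_iff_isUnit_det _).mp hP.isUnit
  have hAA : (A + A * A).PosSemidef := by
    have h := posSemidef_conjTranspose_mul_self A
    rw [hA.1.eq] at h
    exact hA.add h
  have h := hAA.mul_mul_conjTranspose_same (1 + A)⁻¹
  rw [hP.inv.1.eq] at h
  convert h using 1
  have h2 : A + A * A = (1 + A) * (1 + A) - (1 + A) := by noncomm_ring
  rw [h2, mul_sub, sub_mul, nonsing_inv_mul _ hu, one_mul, ← mul_assoc, nonsing_inv_mul _ hu,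
    one_mul, mul_nonsing_inv _ hu]

/-- Subadditivity of `det(I + ·)` over positive semidefinite matrices:
`det(I + A + C) ≤ det(I + A) · det(I + C)`, where all three determinants are
real numbers `≥ 1`. -/
theorem det_one_add_add_le_mul (n : ℕ) (A C : Matrix (Fin n) (Fin n) ℂ)
    (hA : A.PosSemidef) (hC : C.PosSemidef) :
    (1 + A).det.im = 0 ∧ (1 + C).det.im = 0 ∧ (1 + A + C).det.im = 0 ∧
    1 ≤ (1 + A).det.re ∧ 1 ≤ (1 + C).det.re ∧ 1 ≤ (1 + A + C).det.re ∧
    (1 + A + C).det.re ≤ (1 + A).det.re * (1 + C).det.re := by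
  have hP : (1 + A).PosDef := PosDef.one.add_posSemidef hA
  have key : (1 + A + C).det ≤ (1 + A).det * (1 + C).det := by
    obtain ⟨R, rfl⟩ := exists_eq_conjTranspose_mul_self hC
    rw [det_add_mul _ _ ((isUnit_iff_isUnit_det _).mp hP.isUnit), det_one_add_mul_comm Rᴴ R]
    refine mul_le_mul_of_nonneg_left ?_ hP.det_pos.le
    have h := det_le_det_add
      (PosDef.one.add_posSemidef (hP.inv.posSemidef.mul_mul_conjTranspose_same R))
      ((posSemidef_one_sub_inv hA).mul_mul_conjTranspose_same R)
    convert h using 2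
    noncomm_ring
  have h1 := Complex.le_def.mp (one_le_det_one_add hA)
  have h2 := Complex.le_def.mp (one_le_det_one_add hC)
  have h3 := one_le_det_one_add (hA.add hC)
  rw [← add_assoc] at h3
  have h3 := Complex.le_def.mp h3
  have h4 := (Complex.le_def.mp key).1
  rw [Complex.mul_re, ← h1.2, Complex.one_im, zero_mul, sub_zero] at h4
  exact ⟨h1.2.symm, h2.2.symm, h3.2.symm, h1.1, h2.1, h3.1, h4⟩
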